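/- For every integer k ≥ 2, the word [x_1^2, x_2, …, x_k] (the left-normed commutator whose first entry is x_1^2) is good. -/

import Mathlib

/-!
If `w` is good then so is `[w, x_{k+1}]`. Indeed, averaging over the value of `w`, if `[w, x_{k+1}]`
takes some value with probability at least `ε`, then with probability at least `ε / 2` the value of
`w` has a centralizer of index at most `n ≈ 2 / ε`, hence commutes with all `n!`-th powers. The
centralizer `C` of the `n!`-th powers is normal, so `w = 1` holds with probability at least `ε / 2`
in `G ⧸ C`. As `w` is good, `G ⧸ C` satisfies an identity `v`, and `G` satisfies
`[v, x_{m+1}^{n!}]`.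

It remains to see that `x₁²` is good. If `x² = (xa)²`, then `x` conjugates `a` to `a⁻¹`, so for each
`a` these `x` lie in one coset of the centralizer of `a`. Counting pairs `(x, xa)` gives
`P_{G,x₁²}(g)² ≤ P_{G,[x₁,x₂]}(1)`, and `[x₁, x₂]` is good by the first step, because `x₁` is.
-/

open scoped Classical

/-- The commutator `[x, y] = x⁻¹y⁻¹xy` (the convention used in the paper). -/
def pcomm {G : Type*} [Group G] (x y : G) : G := x⁻¹ * y⁻¹ * x * y

/-- The left-normed commutator word `w_k = [x₁, …, x_k] ∈ F_k`,
defined inductively by `w₁ = x₁` and `w_{j+1} = [w_j, x_{j+1}]`. -/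
def commWord : (k : ℕ) → FreeGroup (Fin k)
  | 0 => 1
  | 1 => FreeGroup.of 0
  | (k + 2) =>
      pcomm (FreeGroup.map Fin.castSucc (commWord (k + 1))) (FreeGroup.of (Fin.last (k + 1)))

/-- The left-normed commutator `[g₁, …, g_k]` of group elements. -/
def commElt {G : Type*} [Group G] : {k : ℕ} → (Fin k → G) → G
  | 0, _ => 1
  | 1, f => f 0
  | (_ + 2), f => pcomm (commElt (fun i => f i.castSucc)) (f (Fin.last _))

/-- The word `[x₁², x₂, …, x_k] ∈ F_k`, defined inductively by
`u₁ = x₁²` and `u_{j+1} = [u_j, x_{j+1}]`. -/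
def sqCommWord : (k : ℕ) → FreeGroup (Fin k)
  | 0 => 1
  | 1 => FreeGroup.of 0 ^ 2
  | (k + 2) =>
      pcomm (FreeGroup.map Fin.castSucc (sqCommWord (k + 1))) (FreeGroup.of (Fin.last (k + 1)))

/-- `P_{G,w}(g) = |w_G⁻¹(g)| / |G|^k`, the probability that the word map of `w`
takes the value `g` on a uniformly random `k`-tuple. -/
noncomputable def wordProb {k : ℕ} {G : Type*} [Group G] (w : FreeGroup (Fin k)) (g : G) : ℝ :=
  (Nat.card {f : Fin k → G // FreeGroup.lift f w = g} : ℝ) / (Nat.card G : ℝ) ^ k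

/-- A group is residually finite if every nontrivial element is excluded by
some normal subgroup of finite index. -/
def ResiduallyFinite (Γ : Type*) [Group Γ] : Prop :=
  ∀ g : Γ, g ≠ 1 → ∃ Δ : Subgroup Γ, Δ.Normal ∧ Δ.FiniteIndex ∧ g ∉ Δ

/-- A word `w ≠ 1` is a probabilistic identity of `Γ` if for some `ε > 0` every
finite quotient `H` of `Γ` satisfies `P_{H,w}(1) ≥ ε`. -/
def IsProbIdentity {k : ℕ} (Γ : Type*) [Group Γ] (w : FreeGroup (Fin k)) : Prop :=
  w ≠ 1 ∧ ∃ ε : ℝ, 0 < ε ∧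
    ∀ (Δ : Subgroup Γ) [Δ.Normal], Δ.FiniteIndex → ε ≤ wordProb w (1 : Γ ⧸ Δ)

/-- `G(H)`: the intersection of the kernels of all homomorphisms from `G` to `H`. -/
def kerInt (G H : Type*) [Group G] [Group H] : Subgroup G := ⨅ φ : G →* H, φ.ker

/-- A word `1 ≠ w ∈ F_k` is good if for every `ε > 0` there is a word `1 ≠ v ∈ F_m`,
depending only on `w` and `ε`, which is an identity of every finite group `G`
satisfying `P_{G,w}(g) ≥ ε` for some `g ∈ G`. -/
def IsGood {k : ℕ} (w : FreeGroup (Fin k)) : Prop :=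
  w ≠ 1 ∧ ∀ ε : ℝ, 0 < ε → ∃ (m : ℕ) (v : FreeGroup (Fin m)), v ≠ 1 ∧
    ∀ (G : Type) [Group G] [Finite G],
      (∃ g : G, ε ≤ wordProb w g) → ∀ f : Fin m → G, FreeGroup.lift f v = 1


section Commutator

variable {G H : Type*} [Group G] [Group H]

theorem map_pcomm (φ : G →* H) (x y : G) : φ (pcomm x y) = pcomm (φ x) (φ y) := by
  simp only [pcomm, map_mul, map_inv]

theorem pcomm_eq_iff {u x g : G} : pcomm u x = g ↔ x⁻¹ * u * x = u * g := by
  rw [pcomm, mul_assoc, mul_assoc, inv_mul_eq_iff_eq_mul, ← mul_assoc]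

theorem pcomm_eq_one_iff {u x : G} : pcomm u x = 1 ↔ Commute u x := by
  rw [pcomm_eq_iff, mul_one, mul_assoc, inv_mul_eq_iff_eq_mul, Commute, SemiconjBy]

theorem pcomm_eq_one_iff_mem_centralizer {u x : G} :
    pcomm u x = 1 ↔ x ∈ Subgroup.centralizer {u} := by
  rw [pcomm_eq_one_iff, Subgroup.mem_centralizer_singleton_iff, commute_iff_eq, eq_comm]

theorem mul_inv_mem_centralizer_of_pcomm_eq {u x y : G} (h : pcomm u x = pcomm u y) :
    x * y⁻¹ ∈ Subgroup.centralizer {u} := by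
  rw [pcomm_eq_iff, ← pcomm_eq_iff.1 rfl] at h
  rw [Subgroup.mem_centralizer_singleton_iff]
  calc x * y⁻¹ * u = x * (y⁻¹ * u * y) * y⁻¹ := by group
    _ = x * (x⁻¹ * u * x) * y⁻¹ := by rw [h]
    _ = u * (x * y⁻¹) := by group

theorem card_pcomm_eq_le_card_centralizer [Finite G] (u g : G) :
    Nat.card {x // pcomm u x = g} ≤ Nat.card (Subgroup.centralizer {u}) := by
  obtain _ | ⟨⟨y, rfl⟩⟩ := isEmpty_or_nonempty {x // pcomm u x = g}
  · simp
  · refine Nat.card_le_card_of_injective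
      (fun x ↦ ⟨x * y⁻¹, mul_inv_mem_centralizer_of_pcomm_eq x.2⟩) fun x x' h ↦ ?_
    exact Subtype.ext (mul_right_cancel (congrArg Subtype.val h))

theorem pcomm_eq_of_sq_eq_of_mul_sq_eq {a x g : G} (hx : x ^ 2 = g) (hxa : (x * a) ^ 2 = g) :
    pcomm a x = (a ^ 2)⁻¹ := by
  have hinv : a * x * a = x := by
    apply mul_left_cancel (a := x)
    rw [← sq x, hx, ← hxa, sq]
    simp only [mul_assoc]
  rw [pcomm_eq_iff]
  calc x⁻¹ * a * x = x⁻¹ * (a * x * a) * a⁻¹ := by group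
    _ = a * (a ^ 2)⁻¹ := by rw [hinv]; group

theorem card_sq_eq_sq_le_sum_card_centralizer [Fintype G] (g : G) :
    Nat.card {x : G // x ^ 2 = g} ^ 2 ≤ ∑ a : G, Nat.card (Subgroup.centralizer {a}) := by
  have hinj : Function.Injective
      fun p : {x : G // x ^ 2 = g} × {x : G // x ^ 2 = g} ↦
        (⟨(p.1 : G)⁻¹ * p.2, p.1, pcomm_eq_of_sq_eq_of_mul_sq_eq p.1.2 (by simp [p.2.2])⟩ :
          Σ a : G, {x // pcomm a x = (a ^ 2)⁻¹}) := by
    rintro ⟨⟨x, hx⟩, ⟨y, hy⟩⟩ ⟨⟨x', hx'⟩, ⟨y', hy'⟩⟩ h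
    obtain rfl : x = x' := congrArg (fun q ↦ (q.2 : G)) h
    obtain rfl : y = y' := mul_left_cancel (congrArg Sigma.fst h)
    rfl
  calc Nat.card {x : G // x ^ 2 = g} ^ 2
      = Nat.card ({x : G // x ^ 2 = g} × {x : G // x ^ 2 = g}) := by rw [Nat.card_prod, sq]
    _ ≤ Nat.card (Σ a : G, {x // pcomm a x = (a ^ 2)⁻¹}) := Nat.card_le_card_of_injective _ hinj
    _ = ∑ a : G, Nat.card {x // pcomm a x = (a ^ 2)⁻¹} := Nat.card_sigma
    _ ≤ _ := Finset.sum_le_sum fun a _ ↦ card_pcomm_eq_le_card_centralizer a _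

end Commutator

section PowCentralizer

/-- The centralizer of the set of all `n`-th powers of `G`. -/
def powCentralizer (G : Type*) [Group G] (n : ℕ) : Subgroup G :=
  Subgroup.centralizer (Set.range fun y : G ↦ y ^ n)

variable {G : Type*} [Group G] {n : ℕ} {u : G}

theorem mem_powCentralizer_iff : u ∈ powCentralizer G n ↔ ∀ y : G, pcomm u (y ^ n) = 1 := by
  simp only [powCentralizer, Subgroup.mem_centralizer_iff, Set.forall_mem_range,
    pcomm_eq_one_iff, commute_iff_eq, eq_comm]

instance powCentralizer_normal : (powCentralizer G n).Normal where
  conj_mem u hu g := by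
    rw [mem_powCentralizer_iff] at hu ⊢
    intro y
    have h := congrArg (MulAut.conj g).toMonoidHom (hu (MulAut.conj g⁻¹ y))
    rw [map_pcomm, map_pow, map_one] at h
    simpa [mul_assoc] using h

theorem mem_powCentralizer_factorial [(Subgroup.centralizer {u}).FiniteIndex]
    (h : (Subgroup.centralizer {u}).index ≤ n) :
    u ∈ powCentralizer G n.factorial := by
  refine mem_powCentralizer_iff.2 fun y ↦ pcomm_eq_one_iff_mem_centralizer.2 ?_
  exact Subgroup.pow_mem_of_index_ne_zero_of_dvd Subgroup.FiniteIndex.index_ne_zero y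
    fun m hm hmi ↦ Nat.dvd_factorial hm (hmi.trans h)

end PowCentralizer

section Words

variable {k : ℕ}

/-- The word `[w, x_{k+1}^n] ∈ F_{k+1}`, for `w ∈ F_k`. -/
def pcommLastPow (w : FreeGroup (Fin k)) (n : ℕ) : FreeGroup (Fin (k + 1)) :=
  pcomm (FreeGroup.map Fin.castSucc w) (FreeGroup.of (Fin.last k) ^ n)

theorem sqCommWord_add_two (k : ℕ) :
    sqCommWord (k + 2) = pcommLastPow (sqCommWord (k + 1)) 1 := by
  rw [pcommLastPow, pow_one, sqCommWord]

theorem lift_pcommLastPow {G : Type*} [Group G] (f : Fin (k + 1) → G) (w : FreeGroup (Fin k))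
    (n : ℕ) :
    FreeGroup.lift f (pcommLastPow w n) =
      pcomm (FreeGroup.lift (Fin.init f) w) (f (Fin.last k) ^ n) := by
  have hinit : (FreeGroup.lift f).comp (FreeGroup.map Fin.castSucc) =
      FreeGroup.lift (Fin.init f) := by
    ext i
    simp [Fin.init]
  rw [pcommLastPow, map_pcomm, ← hinit]
  simp

theorem lift_comp_eq_map_lift {ι G H : Type*} [Group G] [Group H] (φ : G →* H) (f : ι → G)
    (w : FreeGroup ι) : FreeGroup.lift (φ ∘ f) w = φ (FreeGroup.lift f w) := by
  have h : FreeGroup.lift (φ ∘ f) = φ.comp (FreeGroup.lift f) := by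
    ext i
    simp
  exact DFunLike.congr_fun h w

theorem eq_one_of_commute_inl_mulSingle_inr {F Z : Type*} [Group F] [Group Z] [DecidableEq Z]
    {w : F} {t : Z} (ht : t ≠ 1)
    (h : Commute (SemidirectProduct.inl (Pi.mulSingle 1 w) : (Z → F) ⋊[mulAutArrow] Z)
      (SemidirectProduct.inr t)) : w = 1 := by
  have hfix : mulAutArrow t (Pi.mulSingle (1 : Z) w) = Pi.mulSingle 1 w := by
    apply SemidirectProduct.inl_injective (φ := (mulAutArrow : Z →* MulAut (Z → F)))
    rw [SemidirectProduct.inl_aut, ← h.eq, map_inv, mul_inv_cancel_right]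
  have hfix_one : (Pi.mulSingle 1 w : Z → F) (t⁻¹ • 1) = (Pi.mulSingle 1 w : Z → F) 1 :=
    congrFun hfix 1
  simpa [ht, Pi.mulSingle_apply, eq_comm] using hfix_one

-- Map `F_k` to one coordinate of the base of the wreath product `F_k ≀ ℤ`, and `x_{k+1}` to the
-- shift: `x_{k+1}^n` moves the support of a nontrivial `w`, so the two do not commute.
theorem pcommLastPow_ne_one {w : FreeGroup (Fin k)} (hw : w ≠ 1) {n : ℕ} (hn : n ≠ 0) :
    pcommLastPow w n ≠ 1 := by
  intro h
  let Z := Multiplicative ℤ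
  let W := (Z → FreeGroup (Fin k)) ⋊[mulAutArrow] Z
  let t : Z := Multiplicative.ofAdd 1
  let φ : FreeGroup (Fin k) →* W :=
    SemidirectProduct.inl.comp (MonoidHom.mulSingle (fun _ : Z ↦ FreeGroup (Fin k)) 1)
  have ht : t ^ n ≠ 1 := mt (pow_eq_one_iff_left hn).1 (by decide)
  have hcomm := lift_pcommLastPow
    (Fin.snoc (α := fun _ ↦ W) (φ ∘ FreeGroup.of) (SemidirectProduct.inr t)) w n
  rw [h, map_one, Fin.init_snoc, Fin.snoc_last, lift_comp_eq_map_lift, eq_comm,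
    pcomm_eq_one_iff, ← map_pow, FreeGroup.lift_of_apply] at hcomm
  exact hw (eq_one_of_commute_inl_mulSingle_inr ht hcomm)

end Words

section Counting

theorem sum_le_card_filter_add_mul_card {ι R : Type*} [Semiring R] [LinearOrder R]
    [IsStrictOrderedRing R] (s : Finset ι) {f : ι → R} {c : R} (hc : 0 ≤ c)
    (hf : ∀ i ∈ s, f i ≤ 1) :
    ∑ i ∈ s, f i ≤ (s.filter fun i ↦ c ≤ f i).card + c * s.card := by
  have hpoint : ∀ i ∈ s, f i ≤ (if c ≤ f i then 1 else 0) + c := by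
    intro i hi
    split_ifs with h
    · exact (hf i hi).trans (le_add_of_nonneg_right hc)
    · simpa using (not_le.1 h).le
  refine (Finset.sum_le_sum hpoint).trans_eq ?_
  rw [Finset.sum_add_distrib, Finset.sum_boole, Finset.sum_const, nsmul_eq_mul, Nat.cast_comm]

variable {G H : Type*} [Group G] [Group H]

theorem sum_inv_index_centralizer_le {ι : Type*} [Fintype ι] [Finite G] (u : ι → G) {n : ℕ}
    (hn : n ≠ 0) :
    ∑ i, ((Subgroup.centralizer {u i}).index : ℝ)⁻¹ ≤
      Nat.card {i // u i ∈ powCentralizer G n.factorial} + (n : ℝ)⁻¹ * Nat.card ι := by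
  have hmem : ∀ i, (n : ℝ)⁻¹ ≤ ((Subgroup.centralizer {u i}).index : ℝ)⁻¹ →
      u i ∈ powCentralizer G n.factorial := by
    intro i h
    have hindex : 0 < (Subgroup.centralizer {u i}).index :=
      Nat.pos_of_ne_zero Subgroup.FiniteIndex.index_ne_zero
    refine mem_powCentralizer_factorial ?_
    exact_mod_cast (inv_le_inv₀ (by positivity) (by positivity)).1 h
  refine (sum_le_card_filter_add_mul_card _ (inv_nonneg.2 n.cast_nonneg)
    fun i _ ↦ Nat.cast_inv_le_one _).trans ?_
  rw [Nat.card_eq_fintype_card, Fintype.card_subtype, Nat.card_eq_fintype_card, Finset.card_univ]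
  gcongr with i
  exact hmem i

theorem card_subtype_comp_eq_of_surjective {φ : G →* H} (hφ : Function.Surjective φ)
    (p : H → Prop) :
    Nat.card {x // p (φ x)} = Nat.card {y // p y} * Nat.card φ.ker := by
  rw [← Nat.card_prod]
  exact Nat.card_congr
    ((Equiv.sigmaSubtypeFiberEquivSubtype φ fun _ ↦ Iff.rfl).symm.trans
      (Equiv.sigmaEquivProdOfEquiv fun y ↦ φ.fiberEquivKerOfSurjective hφ y))

end Counting

section WordProb

variable {k : ℕ} {G H : Type*} [Group G] [Group H]

theorem wordProb_eq_of_surjective [Finite G] {φ : G →* H} (hφ : Function.Surjective φ)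
    (w : FreeGroup (Fin k)) (h : H) :
    wordProb w h =
      Nat.card {f : Fin k → G // φ (FreeGroup.lift f w) = h} / (Nat.card G : ℝ) ^ k := by
  let Φ : (Fin k → G) →* (Fin k → H) := φ.compLeft (Fin k)
  have hΦ : Function.Surjective Φ := hφ.comp_left
  have hker : (Nat.card Φ.ker : ℝ) ≠ 0 := by exact_mod_cast Nat.card_pos.ne'
  have hcount := card_subtype_comp_eq_of_surjective hΦ fun f ↦ FreeGroup.lift f w = h
  have htotal := card_subtype_comp_eq_of_surjective hΦ fun _ ↦ True
  have hcomp : ∀ f : Fin k → G, FreeGroup.lift (Φ f) w = φ (FreeGroup.lift f w) := fun f ↦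
    lift_comp_eq_map_lift φ f w
  simp only [hcomp] at hcount
  simp only [Nat.card_congr (Equiv.subtypeUnivEquiv fun _ ↦ trivial), Nat.card_fun,
    Nat.card_fin] at htotal
  rw [wordProb, hcount, ← Nat.cast_pow, ← Nat.cast_pow, htotal]
  push_cast
  exact (mul_div_mul_right _ _ hker).symm

theorem wordProb_one_quotient [Finite G] (N : Subgroup G) [N.Normal] (w : FreeGroup (Fin k)) :
    wordProb w (1 : G ⧸ N) =
      Nat.card {f : Fin k → G // FreeGroup.lift f w ∈ N} / (Nat.card G : ℝ) ^ k := by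
  simp only [wordProb_eq_of_surjective (QuotientGroup.mk'_surjective N),
    ← MonoidHom.mem_ker, QuotientGroup.ker_mk']

theorem card_lift_pcommLastPow_one_eq [Fintype G] (w : FreeGroup (Fin k)) (g : G) :
    Nat.card {f : Fin (k + 1) → G // FreeGroup.lift f (pcommLastPow w 1) = g} =
      ∑ f : Fin k → G, Nat.card {x // pcomm (FreeGroup.lift f w) x = g} := by
  rw [← Nat.card_sigma]
  refine Nat.card_congr (Equiv.trans ?_
    (Equiv.subtypeProdEquivSigmaSubtype fun f x ↦ pcomm (FreeGroup.lift f w) x = g))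
  refine ((Fin.snocEquiv fun _ ↦ G).symm.trans (Equiv.prodComm _ _)).subtypeEquiv fun f ↦ ?_
  rw [lift_pcommLastPow, pow_one]
  rfl

theorem wordProb_pcommLastPow_one_one [Fintype G] (w : FreeGroup (Fin k)) :
    wordProb (pcommLastPow w 1) (1 : G) =
      (∑ f : Fin k → G, ((Subgroup.centralizer {FreeGroup.lift f w}).index : ℝ)⁻¹) /
        (Nat.card G : ℝ) ^ k := by
  have hindex : ∀ H : Subgroup G, (H.index : ℝ)⁻¹ = Nat.card H / Nat.card G := by
    intro H
    have hH : (Nat.card H : ℝ) ≠ 0 := by exact_mod_cast Nat.card_pos.ne'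
    rw [← H.card_mul_index, Nat.cast_mul, ← div_div, div_self hH, one_div]
  simp only [wordProb, card_lift_pcommLastPow_one_eq, pcomm_eq_one_iff_mem_centralizer, hindex,
    ← Finset.sum_div, div_div, Nat.cast_sum, ← pow_succ']

theorem wordProb_pcommLastPow_one_le_wordProb_one [Finite G] (w : FreeGroup (Fin k)) (g : G) :
    wordProb (pcommLastPow w 1) g ≤ wordProb (pcommLastPow w 1) (1 : G) := by
  cases nonempty_fintype G
  simp only [wordProb, card_lift_pcommLastPow_one_eq, pcomm_eq_one_iff_mem_centralizer]
  gcongr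
  exact card_pcomm_eq_le_card_centralizer _ _

theorem wordProb_pcommLastPow_one_one_le_add_inv [Finite G] (w : FreeGroup (Fin k)) {n : ℕ}
    (hn : n ≠ 0) :
    wordProb (pcommLastPow w 1) (1 : G) ≤
      wordProb w (1 : G ⧸ powCentralizer G n.factorial) + (n : ℝ)⁻¹ := by
  cases nonempty_fintype G
  have hG : (0 : ℝ) < (Nat.card G : ℝ) ^ k := pow_pos (by exact_mod_cast Nat.card_pos) k
  rw [wordProb_pcommLastPow_one_one, wordProb_one_quotient, div_add' _ _ _ hG.ne']
  gcongr
  simpa using sum_inv_index_centralizer_le (fun f : Fin k → G ↦ FreeGroup.lift f w) hn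

theorem wordProb_freeGroup_of (g : G) :
    wordProb (FreeGroup.of (0 : Fin 1)) g = (Nat.card G : ℝ)⁻¹ := by
  have hcard : Nat.card {f : Fin 1 → G // f 0 = g} = Nat.card {x : G // x = g} :=
    Nat.card_congr ((Equiv.funUnique (Fin 1) G).subtypeEquiv fun _ ↦ Iff.rfl)
  simp [wordProb, hcard]

theorem wordProb_freeGroup_of_sq_sq_le [Finite G] (g : G) :
    wordProb (FreeGroup.of (0 : Fin 1) ^ 2) g ^ 2 ≤
      wordProb (pcommLastPow (FreeGroup.of (0 : Fin 1)) 1) (1 : G) := by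
  cases nonempty_fintype G
  have hsq : Nat.card {f : Fin 1 → G // f 0 ^ 2 = g} = Nat.card {x : G // x ^ 2 = g} :=
    Nat.card_congr ((Equiv.funUnique (Fin 1) G).subtypeEquiv fun _ ↦ Iff.rfl)
  have hsum : ∑ f : Fin 1 → G, Nat.card (Subgroup.centralizer {f 0}) =
      ∑ a : G, Nat.card (Subgroup.centralizer {a}) :=
    (Equiv.funUnique (Fin 1) G).sum_comp fun a ↦ Nat.card (Subgroup.centralizer {a})
  simp only [wordProb, card_lift_pcommLastPow_one_eq, pcomm_eq_one_iff_mem_centralizer,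
    map_pow, FreeGroup.lift_apply_of, hsq, hsum, div_pow, pow_one]
  gcongr
  exact_mod_cast card_sq_eq_sq_le_sum_card_centralizer g

end WordProb

section Good

variable {k : ℕ}

theorem isGood_freeGroup_of : IsGood (FreeGroup.of (0 : Fin 1)) := by
  refine ⟨FreeGroup.of_ne_one 0, fun ε hε ↦ ?_⟩
  obtain ⟨n, hn⟩ := exists_nat_ge ε⁻¹
  refine ⟨1, FreeGroup.of 0 ^ n.factorial,
    mt (pow_eq_one_iff_left n.factorial_ne_zero).1 (FreeGroup.of_ne_one 0), ?_⟩
  rintro G _ _ ⟨g, hg⟩ f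
  rw [wordProb_freeGroup_of] at hg
  have hcard : Nat.card G ≤ n := by exact_mod_cast (le_inv_of_le_inv₀ hε hg).trans hn
  rw [map_pow]
  exact orderOf_dvd_iff_pow_eq_one.1
    ((orderOf_dvd_natCard _).trans (Nat.dvd_factorial Nat.card_pos hcard))

theorem IsGood.pcommLastPow_one {w : FreeGroup (Fin k)} (hw : IsGood w) :
    IsGood (pcommLastPow w 1) := by
  refine ⟨pcommLastPow_ne_one hw.1 one_ne_zero, fun ε hε ↦ ?_⟩
  obtain ⟨m, v, hv, hident⟩ := hw.2 (ε / 2) (half_pos hε)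
  obtain ⟨n, hn, hnε⟩ := Real.exists_nat_pos_inv_lt (half_pos hε)
  refine ⟨m + 1, pcommLastPow v n.factorial, pcommLastPow_ne_one hv n.factorial_ne_zero, ?_⟩
  rintro G _ _ ⟨g, hg⟩ f
  have hprob : ε / 2 ≤ wordProb w (1 : G ⧸ powCentralizer G n.factorial) := by
    linarith [wordProb_pcommLastPow_one_le_wordProb_one w g,
      wordProb_pcommLastPow_one_one_le_add_inv (G := G) w hn.ne']
  have hmem : FreeGroup.lift (Fin.init f) v ∈ powCentralizer G n.factorial := by
    rw [← QuotientGroup.eq_one_iff, ← QuotientGroup.mk'_apply, ← lift_comp_eq_map_lift]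
    exact hident _ ⟨1, hprob⟩ _
  rw [lift_pcommLastPow]
  exact mem_powCentralizer_iff.1 hmem _

theorem isGood_freeGroup_of_sq : IsGood (FreeGroup.of (0 : Fin 1) ^ 2) := by
  refine ⟨mt (pow_eq_one_iff_left two_ne_zero).1 (FreeGroup.of_ne_one 0), fun ε hε ↦ ?_⟩
  obtain ⟨m, v, hv, hident⟩ := isGood_freeGroup_of.pcommLastPow_one.2 (ε ^ 2) (by positivity)
  refine ⟨m, v, hv, ?_⟩
  rintro G _ _ ⟨g, hg⟩
  exact hident G ⟨1, (pow_le_pow_left₀ hε.le hg 2).trans (wordProb_freeGroup_of_sq_sq_le g)⟩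

end Good

theorem stmt9_general (k : ℕ) (hk : 1 ≤ k) : IsGood (sqCommWord k) := by
  obtain ⟨k, rfl⟩ := Nat.exists_eq_add_of_le' hk
  induction k with
  | zero => exact isGood_freeGroup_of_sq
  | succ k ih =>
    rw [sqCommWord_add_two]
    exact (ih (Nat.le_add_left 1 k)).pcommLastPow_one

/-- For every `k ≥ 2`, the word `[x₁², x₂, …, x_k]` is good. -/
theorem stmt9 (k : ℕ) (hk : 2 ≤ k) : IsGood (sqCommWord k) :=
  stmt9_general k (one_le_two.trans hk)
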